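/- arXiv:1608.03954 — 2 statements merged into one kernel-verified Lean document; each statement's English description precedes it below -/
import Mathlib

section
/- Let X and Y be nonempty proper metric spaces, let n ∈ ℕ, and let f : X → Y be coarse, coarsely open, coarsely n-to-1 and coarsely surjective. Then asdim(Y) = asdim(X). -/
open Metric Bornology Function Set

/-- A map between metric spaces is (coarsely) proper if preimages of bounded
sets are bounded. -/
def MetricallyProper {X Y : Type*} [MetricSpace X] [MetricSpace Y] (f : X → Y) : Prop :=
  ∀ B : Set Y, IsBounded B → IsBounded (f ⁻¹' B)

/-- A coarse map: proper, and uniformly bornologous. -/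
def CoarseMap {X Y : Type*} [MetricSpace X] [MetricSpace Y] (f : X → Y) : Prop :=
  MetricallyProper f ∧
    ∀ R > (0:ℝ), ∃ S > (0:ℝ), ∀ x x' : X, dist x x' ≤ R → dist (f x) (f x') ≤ S

/-- Coarsely surjective map. -/
def CoarselySurjective {X Y : Type*} [MetricSpace X] [MetricSpace Y] (f : X → Y) : Prop :=
  ∃ R > (0:ℝ), ∀ y : Y, ∃ x : X, dist y (f x) ≤ R

/-- `f` is coarsely `n`-to-1. -/
def CoarselyNTo1 {X Y : Type*} [MetricSpace X] [MetricSpace Y] (f : X → Y) (n : ℕ) : Prop :=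
  ∀ R > (0:ℝ), ∃ S > (0:ℝ), ∀ A : Set Y, (∀ y ∈ A, ∀ y' ∈ A, dist y y' ≤ R) →
    ∃ V : Fin n → Set X, (∀ i, ∀ x ∈ V i, ∀ x' ∈ V i, dist x x' ≤ S) ∧ f ⁻¹' A ⊆ ⋃ i, V i

/-- `f` is coarsely finite-to-1. -/
def CoarselyFiniteTo1 {X Y : Type*} [MetricSpace X] [MetricSpace Y] (f : X → Y) : Prop :=
  ∀ R > (0:ℝ), ∃ S > (0:ℝ), ∃ m : ℕ, ∀ A : Set Y, (∀ y ∈ A, ∀ y' ∈ A, dist y y' ≤ R) →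
    ∃ V : Fin m → Set X, (∀ i, ∀ x ∈ V i, ∀ x' ∈ V i, dist x x' ≤ S) ∧ f ⁻¹' A ⊆ ⋃ i, V i

/-- Two maps are close. -/
def Close {X Y : Type*} [MetricSpace X] [MetricSpace Y] (f g : X → Y) : Prop :=
  ∃ R > (0:ℝ), ∀ x : X, dist (f x) (g x) ≤ R

/-- `f` is a coarse equivalence. -/
def CoarseEquivalence {X Y : Type*} [MetricSpace X] [MetricSpace Y] (f : X → Y) : Prop :=
  CoarseMap f ∧ ∃ g : Y → X, CoarseMap g ∧ Close (f ∘ g) id ∧ Close (g ∘ f) id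

/-- `X` and `Y` are coarsely equivalent. -/
def CoarselyEquivalent (X Y : Type*) [MetricSpace X] [MetricSpace Y] : Prop :=
  ∃ f : X → Y, CoarseEquivalence f

/-- A family of subsets is uniformly bounded. -/
def UnifBounded {X : Type*} [MetricSpace X] (𝒰 : Set (Set X)) : Prop :=
  ∃ S : ℝ, ∀ U ∈ 𝒰, ∀ x ∈ U, ∀ y ∈ U, dist x y ≤ S

/-- A family of subsets is `R`-disjoint: distinct members lie at distance `> R`. -/
def RDisjointFam {X : Type*} [MetricSpace X] (𝒰 : Set (Set X)) (R : ℝ) : Prop :=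
  ∀ U ∈ 𝒰, ∀ V ∈ 𝒰, U ≠ V → ∀ x ∈ U, ∀ y ∈ V, R < dist x y

/-- `asdim X ≤ n`. -/
def ASDimLE (X : Type*) [MetricSpace X] (n : ℕ) : Prop :=
  ∀ R > (0:ℝ), ∃ 𝒰 : Fin (n + 1) → Set (Set X),
    (∀ i, UnifBounded (𝒰 i)) ∧ (∀ i, RDisjointFam (𝒰 i) R) ∧
      ∀ x : X, ∃ i, ∃ U ∈ 𝒰 i, x ∈ U

/-- The asymptotic dimension of `X`, valued in `ℕ∞`. -/
noncomputable def asdim (X : Type*) [MetricSpace X] : ℕ∞ :=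
  sInf {n : ℕ∞ | ∃ m : ℕ, n = (m : ℕ∞) ∧ ASDimLE X m}

/-- TI-increasing functions `[0,∞) → [0,∞)`. -/
def TIIncreasing (ρ : NNReal → NNReal) : Prop :=
  Monotone ρ ∧ Filter.Tendsto ρ Filter.atTop Filter.atTop

/-- The variable-radius neighborhood `N(A, ρ)` with respect to a basepoint `x₀`. -/
def GrowNbhd {X : Type*} [MetricSpace X] (x₀ : X) (A : Set X) (ρ : NNReal → NNReal) : Set X :=
  {x' | ∃ x ∈ A, nndist x' x ≤ ρ (nndist x x₀)}

/-- `f` is coarsely open (with respect to basepoints `x₀`, `y₀`). -/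
def CoarselyOpen {X Y : Type*} [MetricSpace X] [MetricSpace Y] (f : X → Y)
    (x₀ : X) (y₀ : Y) : Prop :=
  ∀ A : Set X, ¬ IsBounded A → ∀ ρ : NNReal → NNReal, TIIncreasing ρ →
    ∃ ρ' : NNReal → NNReal, TIIncreasing ρ' ∧
      GrowNbhd y₀ (f '' A) ρ' ⊆ f '' GrowNbhd x₀ A ρ

/-- `N(A, R)`, the closed `R`-neighborhood of `A`. -/
def NbhdR {X : Type*} [MetricSpace X] (A : Set X) (R : ℝ) : Set X :=
  {x | ∃ a ∈ A, dist x a ≤ R}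

/-- A finite collection of subsets is gradually disjoint. -/
def GraduallyDisjoint {X : Type*} [MetricSpace X] {k : ℕ} (A : Fin k → Set X) : Prop :=
  ∀ R > (0:ℝ), ∃ B : Set X, IsBounded B ∧
    ∀ i j, i ≠ j → Disjoint (NbhdR (A i) R \ B) (NbhdR (A j) R \ B)

/-- A finite collection of subsets diverges. -/
def Diverges {X : Type*} [MetricSpace X] {k : ℕ} (A : Fin k → Set X) : Prop :=
  ∀ R > (0:ℝ), IsBounded (⋂ i, NbhdR (A i) R)

/-- A countable collection of subsets is gradually disjoint: every finite
subcollection is. -/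
def GraduallyDisjointSeq {X : Type*} [MetricSpace X] (A : ℕ → Set X) : Prop :=
  ∀ s : Finset ℕ, ∀ R > (0:ℝ), ∃ B : Set X, IsBounded B ∧
    ∀ i ∈ s, ∀ j ∈ s, i ≠ j → Disjoint (NbhdR (A i) R \ B) (NbhdR (A j) R \ B)

/-- A countable collection of subsets diverges: some finite subcollection diverges. -/
def DivergesSeq {X : Type*} [MetricSpace X] (A : ℕ → Set X) : Prop :=
  ∃ s : Finset ℕ, ∀ R > (0:ℝ), IsBounded (⋂ i ∈ s, NbhdR (A i) R)

/-- A complex-valued function on a metric space is slowly oscillating. -/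
def SlowlyOscillating {X : Type*} [MetricSpace X] (φ : X → ℂ) : Prop :=
  ∀ R > (0:ℝ), ∀ ε > (0:ℝ), ∃ A : Set X, IsBounded A ∧
    ∀ x : X, ∀ p ∈ closedBall x R \ A, ∀ p' ∈ closedBall x R \ A, dist (φ p) (φ p') ≤ ε


/-!
Call the components of a set under jumps of length at most `r` its `r`-components; `asdim X ≤ m`
means that for every `r` the space is a union of `m + 1` sets with uniformly bounded `r`-components.

`asdim X ≤ asdim Y`: coarse fibres are unions of `n` uniformly bounded sets, hence have uniformly
bounded `r`-components, and colourings of `Y` pull back.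

`asdim Y ≤ asdim X`: coarse openness is first made uniform. If lifting of nearby points failed, it
would fail along a sequence tending to infinity whose failures do not interact, and a slowly growing
radius `ρ` adapted to that sequence would violate coarse openness. So `f` is a coarse quotient map:
the coarse fibres `F y` over nearby points are at bounded Hausdorff distance. If no distance between
two points of `F y` lies in `(a, b]`, with `b` much larger than `a`, then `F y` splits into
well-separated clusters, and over an `r`-component of bounded size a cluster can be followed
consistently, which gives a coarse section and transports colourings of `X` to `Y` with no loss of
dimension. The `r`-components of bounded size are supplied by the crude bound
`asdim Y + 1 ≤ n * (asdim X + 1)`, and the constants do not depend on their size. As `F y` is a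
union of `n` bounded sets, along any increasing sequence `a 0 ≤ a 1 ≤ ⋯` each `F y` has such a gap
between `a i` and `a (i + 1)` for some `i ≤ n ^ 2`, so `Y` is a finite union of the sets of `y` with
a prescribed gap, and unions do not raise the dimension.
-/

open Filter Relation
open scoped NNReal

section Chains

variable {X Y : Type*} [PseudoMetricSpace X] [PseudoMetricSpace Y]
  {r r' s D D' E : ℝ≥0} {A B : Set X} {x y z : X}

/-- The `r`-component of `x` in `A`: the points reachable from `x` by finitely many jumps of length
at most `r` between points of `A`. It is `{x}` when `x ∉ A`. -/
def chainComponent (r : ℝ≥0) (A : Set X) (x : X) : Set X :=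
  {y | ReflTransGen (fun u v ↦ u ∈ A ∧ v ∈ A ∧ dist u v ≤ r) x y}

theorem mem_chainComponent_self (r : ℝ≥0) (A : Set X) (x : X) : x ∈ chainComponent r A x :=
  ReflTransGen.refl

theorem mem_chainComponent_of_dist_le (hy : y ∈ chainComponent r A x) (hyA : y ∈ A) (hzA : z ∈ A)
    (hyz : dist y z ≤ r) : z ∈ chainComponent r A x :=
  ReflTransGen.tail hy ⟨hyA, hzA, hyz⟩

theorem chainComponent_subset_of_closed {P : Set X} (hx : x ∈ P)
    (hP : ∀ u ∈ P, ∀ v, u ∈ A → v ∈ A → dist u v ≤ r → v ∈ P) : chainComponent r A x ⊆ P := by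
  intro y hy
  induction hy with
  | refl => exact hx
  | tail _ huv hu => exact hP _ hu _ huv.1 huv.2.1 huv.2.2

theorem chainComponent_subset (hx : x ∈ A) : chainComponent r A x ⊆ A :=
  chainComponent_subset_of_closed hx fun _ _ _ _ hv _ ↦ hv

theorem chainComponent_eq_singleton (hx : x ∉ A) : chainComponent r A x = {x} := by
  refine Subset.antisymm (chainComponent_subset_of_closed rfl ?_)
    (singleton_subset_iff.2 (mem_chainComponent_self r A x))
  rintro _ rfl v hxA
  exact absurd hxA hx

theorem chainComponent_eq_of_mem (hy : y ∈ chainComponent r A x) :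
    chainComponent r A y = chainComponent r A x := by
  have : Std.Symm fun u v : X ↦ u ∈ A ∧ v ∈ A ∧ dist u v ≤ r :=
    ⟨fun _ _ ⟨hu, hv, huv⟩ ↦ ⟨hv, hu, by rwa [dist_comm]⟩⟩
  have hsymm : x ∈ chainComponent r A y := ReflTransGen.stdSymm.symm _ _ hy
  exact Subset.antisymm (fun _ hz ↦ ReflTransGen.trans hy hz)
    fun _ hz ↦ ReflTransGen.trans hsymm hz

theorem chainComponent_eq_of_dist_le (hx : x ∈ A) (hy : y ∈ A) (hxy : dist x y ≤ r) :
    chainComponent r A x = chainComponent r A y :=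
  (chainComponent_eq_of_mem
    (mem_chainComponent_of_dist_le (mem_chainComponent_self r A x) hx hy hxy)).symm

theorem mapsTo_chainComponent {f : X → Y} {B : Set Y} (hAB : MapsTo f A B)
    (hf : ∀ u ∈ A, ∀ v ∈ A, dist u v ≤ r → dist (f u) (f v) ≤ s) (x : X) :
    MapsTo f (chainComponent r A x) (chainComponent s B (f x)) :=
  fun _ hy ↦ ReflTransGen.lift f
    (fun _ _ ⟨hu, hv, huv⟩ ↦ ⟨hAB hu, hAB hv, hf _ hu _ hv huv⟩) _ _ hy

theorem chainComponent_mono (hAB : A ⊆ B) (hr : r ≤ r') (x : X) :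
    chainComponent r A x ⊆ chainComponent r' B x :=
  mapsTo_chainComponent (f := id) hAB (fun _ _ _ _ h ↦ h.trans (NNReal.coe_le_coe.2 hr)) x

theorem encard_chainComponent_le {κ ι : Type*} [Fintype κ] [Fintype ι] {V : ι → Set X}
    (hV : ∀ i, ∀ x ∈ V i, ∀ y ∈ V i, dist x y ≤ r) (C : κ → Set X) :
    {p : κ × Set X | ∃ x ∈ ⋃ i, V i, x ∈ C p.1 ∧ chainComponent r (C p.1) x = p.2}.encard ≤
      (Fintype.card κ * Fintype.card ι : ℕ) := by
  have hmem : ∀ p : {p : κ × Set X | ∃ x ∈ ⋃ i, V i, x ∈ C p.1 ∧ chainComponent r (C p.1) x = p.2},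
      ∃ i, ∃ x ∈ V i, x ∈ C p.1.1 ∧ chainComponent r (C p.1.1) x = p.1.2 := by
    rintro ⟨p, x, hxV, hx⟩
    obtain ⟨i, hi⟩ := mem_iUnion.1 hxV
    exact ⟨i, x, hi, hx⟩
  choose i x hxV hxC hxp using hmem
  have hinj : Injective fun p ↦ (p.1.1, i p) := by
    intro p q hpq
    obtain ⟨hc, hi⟩ := Prod.ext_iff.1 hpq
    dsimp only at hc hi
    refine Subtype.ext (Prod.ext hc ?_)
    rw [← hxp p, ← hxp q, ← hc]
    exact chainComponent_eq_of_dist_le (hxC p) (hc ▸ hxC q) (hV _ _ (hxV p) _ (hi ▸ hxV q))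
  simpa using ENat.card_le_card_of_injective hinj

/-- All `r`-components of `A` have diameter at most `D`: at scale `r`, the set `A` is
zero-dimensional with bound `D`. -/
def ChainBounded (r D : ℝ≥0) (A : Set X) : Prop :=
  ∀ x, ∀ y ∈ chainComponent r A x, dist x y ≤ D

theorem chainBounded_of_forall_mem
    (h : ∀ x ∈ A, ∀ y ∈ chainComponent r A x, dist x y ≤ D) : ChainBounded r D A := by
  intro x y hy
  by_cases hx : x ∈ A
  · exact h x hx y hy
  · rw [chainComponent_eq_singleton hx, mem_singleton_iff] at hy
    rw [hy, dist_self]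
    exact D.coe_nonneg

theorem chainBounded_of_dist_le (h : ∀ x ∈ A, ∀ y ∈ A, dist x y ≤ D) : ChainBounded r D A :=
  chainBounded_of_forall_mem fun x hx y hy ↦ h x hx y (chainComponent_subset hx hy)

theorem ChainBounded.mono (h : ChainBounded r' D B) (hAB : A ⊆ B) (hr : r ≤ r') (hD : D ≤ D') :
    ChainBounded r D' A :=
  fun x y hy ↦ (h x y (chainComponent_mono hAB hr x hy)).trans (NNReal.coe_le_coe.2 hD)

theorem ChainBounded.union (hA : ChainBounded r D A) (hB : ChainBounded (2 * r + D) D' B) :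
    ChainBounded r (D' + 2 * (D + r)) (A ∪ B) := by
  intro x
  -- An `r`-chain in `A ∪ B` leaving `x` visits points of `B` at most `2 * r + D` apart, because
  -- between two of them it stays in one `r`-component of `A`. `T` collects the visited points.
  let T : Set X := {b' | ∃ b ∈ B, dist x b ≤ D + r ∧ b' ∈ chainComponent (2 * r + D) B b}
  let P : Set X := chainComponent r A x ∪
    {y | ∃ b ∈ T, ∃ u, dist b u ≤ r ∧ y ∈ chainComponent r A u}
  have dist_le_of_near {b u y : X} (hbu : dist b u ≤ r) (hy : y ∈ chainComponent r A u) :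
      dist b y ≤ r + D := (dist_triangle b u y).trans (add_le_add hbu (hA u y hy))
  have mem_T : ∀ y ∈ P, ∀ w ∈ B, dist y w ≤ r → w ∈ T := by
    rintro y (hy | ⟨b', ⟨b, hb, hxb, hbb'⟩, u, hbu, hy⟩) w hw hyw
    · exact ⟨w, hw, (dist_triangle x y w).trans (add_le_add (hA x y hy) hyw),
        mem_chainComponent_self _ B w⟩
    · refine ⟨b, hb, hxb, mem_chainComponent_of_dist_le hbb' (chainComponent_subset hb hbb') hw ?_⟩
      push_cast
      linarith [dist_triangle b' y w, dist_le_of_near hbu hy]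
  have mem_P : ∀ w ∈ T, ∀ v, dist w v ≤ r → v ∈ P := fun w hw v hwv ↦
    Or.inr ⟨w, hw, v, hwv, mem_chainComponent_self r A v⟩
  have hP : chainComponent r (A ∪ B) x ⊆ P := by
    refine chainComponent_subset_of_closed (Or.inl (mem_chainComponent_self r A x)) ?_
    rintro y hyP v (hyA | hyB) (hvA | hvB) hyv
    · rcases hyP with hy | ⟨b, hb, u, hbu, hy⟩
      · exact Or.inl (mem_chainComponent_of_dist_le hy hyA hvA hyv)
      · exact Or.inr ⟨b, hb, u, hbu, mem_chainComponent_of_dist_le hy hyA hvA hyv⟩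
    · exact mem_P v (mem_T y hyP v hvB hyv) v (by simp)
    · exact mem_P y (mem_T y hyP y hyB (by simp)) v hyv
    · exact mem_P y (mem_T y hyP y hyB (by simp)) v hyv
  intro y hy
  push_cast
  rcases hP hy with hy | ⟨b', ⟨b, _, hxb, hbb'⟩, u, hbu, hy⟩
  · linarith [hA x y hy, D.coe_nonneg, D'.coe_nonneg, r.coe_nonneg]
  · linarith [dist_triangle4 x b b' y, hB b b' hbb', dist_le_of_near hbu hy]

theorem ChainBounded.preimage {f : X → Y} {C : Set Y} (hC : ChainBounded s E C)
    (hf : ∀ u v, dist u v ≤ r → dist (f u) (f v) ≤ s)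
    (hfib : ∀ y, ChainBounded r D (f ⁻¹' closedBall y E)) : ChainBounded r D (f ⁻¹' C) := by
  intro x y hy
  have hball : ∀ u, f u ∈ chainComponent s C (f x) → u ∈ f ⁻¹' closedBall (f x) E := fun u hu ↦
    mem_closedBall'.2 (hC _ _ hu)
  suffices chainComponent r (f ⁻¹' C) x ⊆
      chainComponent r (f ⁻¹' closedBall (f x) E) x ∩ f ⁻¹' chainComponent s C (f x) from
    hfib (f x) x y (this hy).1
  refine chainComponent_subset_of_closed
    ⟨mem_chainComponent_self _ _ x, mem_chainComponent_self _ _ (f x)⟩ ?_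
  rintro u ⟨hu, hfu⟩ v huC hvC huv
  have hfv := mem_chainComponent_of_dist_le hfu huC hvC (hf u v huv)
  exact ⟨mem_chainComponent_of_dist_le hu (hball u hfu) (hball v hfv) huv, hfv⟩

/-- The set `A` is covered by `k` sets whose `r`-components have diameter at most `D`. Asymptotic
dimension at most `m` means that such covers exist with `k = m + 1` and `D` depending on `r`. -/
def ChainCoverable (k : ℕ) (r D : ℝ≥0) (A : Set X) : Prop :=
  ∃ C : Fin k → Set X, A ⊆ ⋃ i, C i ∧ ∀ i, ChainBounded r D (C i)

variable {k : ℕ}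

theorem chainCoverable_empty (k : ℕ) (r D : ℝ≥0) : ChainCoverable k r D (∅ : Set X) :=
  ⟨fun _ ↦ ∅, empty_subset _, fun _ ↦ chainBounded_of_dist_le (by simp)⟩

theorem ChainCoverable.mono (h : ChainCoverable k r' D B) (hAB : A ⊆ B) (hr : r ≤ r') :
    ChainCoverable k r D A :=
  let ⟨C, hBC, hC⟩ := h
  ⟨C, hAB.trans hBC, fun i ↦ (hC i).mono Subset.rfl hr le_rfl⟩

theorem ChainCoverable.union (hA : ChainCoverable k r D A)
    (hB : ChainCoverable k (2 * r + D) D' B) :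
    ChainCoverable k r (D' + 2 * (D + r)) (A ∪ B) := by
  obtain ⟨C, hAC, hC⟩ := hA
  obtain ⟨C', hBC', hC'⟩ := hB
  refine ⟨fun i ↦ C i ∪ C' i, ?_, fun i ↦ (hC i).union (hC' i)⟩
  rw [iUnion_union_distrib]
  exact union_subset_union hAC hBC'

theorem ChainCoverable.comap {Z : Set Y} {g : Y → X} (h : ChainCoverable k s E (univ : Set X))
    (hg : ∀ u ∈ Z, ∀ v ∈ Z, dist u v ≤ r → dist (g u) (g v) ≤ s)
    (hg' : ∀ u v, dist (g u) (g v) ≤ E → dist u v ≤ D) : ChainCoverable k r D Z := by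
  obtain ⟨C, hcover, hC⟩ := h
  refine ⟨fun i ↦ Z ∩ g ⁻¹' C i, fun y hy ↦ ?_, fun i y z hz ↦ hg' y z (hC i _ _ ?_)⟩
  · obtain ⟨i, hi⟩ := mem_iUnion.1 (hcover (mem_univ (g y)))
    exact mem_iUnion.2 ⟨i, hy, hi⟩
  · exact mapsTo_chainComponent (fun _ hu ↦ hu.2) (fun u hu v hv ↦ hg u hu.1 v hv.1) y hz

/-- The sets `A i` have asymptotic dimension less than `k` uniformly along the filter `l`. -/
def UniformlyChainCoverable {ι : Type*} (k : ℕ) (l : Filter ι) (A : ι → Set X) : Prop :=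
  ∀ r : ℝ≥0, ∃ D : ℝ≥0, ∀ᶠ i in l, ChainCoverable k r D (A i)

theorem UniformlyChainCoverable.union {ι : Type*} {l : Filter ι} {A B : ι → Set X}
    (hA : UniformlyChainCoverable k l A) (hB : UniformlyChainCoverable k l B) :
    UniformlyChainCoverable k l fun i ↦ A i ∪ B i := by
  intro r
  obtain ⟨D, hD⟩ := hA r
  obtain ⟨D', hD'⟩ := hB (2 * r + D)
  exact ⟨_, (hD.and hD').mono fun i h ↦ h.1.union h.2⟩

theorem UniformlyChainCoverable.iUnion {ι κ : Type*} [Finite κ] {l : Filter ι}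
    {A : κ → ι → Set X} (hA : ∀ j, UniformlyChainCoverable k l (A j)) :
    UniformlyChainCoverable k l fun i ↦ ⋃ j, A j i := by
  classical
  have := Fintype.ofFinite κ
  suffices ∀ t : Finset κ, UniformlyChainCoverable k l fun i ↦ ⋃ j ∈ t, A j i by
    simpa using this Finset.univ
  intro t
  induction t using Finset.induction_on with
  | empty => exact fun r ↦ ⟨0, .of_forall fun i ↦ by simpa using chainCoverable_empty k r 0⟩
  | insert j t _ ih => simpa only [Finset.set_biUnion_insert] using (hA j).union ih

theorem exists_chainBounded_iUnion (X : Type*) [PseudoMetricSpace X] (κ : Type*) [Finite κ]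
    (r S : ℝ≥0) : ∃ D : ℝ≥0, ∀ V : κ → Set X,
      (∀ j, ∀ x ∈ V j, ∀ y ∈ V j, dist x y ≤ S) → ChainBounded r D (⋃ j, V j) := by
  let 𝒱 := {V : κ → Set X // ∀ j, ∀ x ∈ V j, ∀ y ∈ V j, dist x y ≤ S}
  have hV : ∀ j, UniformlyChainCoverable 1 ⊤ fun V : 𝒱 ↦ V.1 j := fun j r ↦
    ⟨S, .of_forall fun V ↦ ⟨fun _ ↦ V.1 j, subset_iUnion_of_subset 0 Subset.rfl,
      fun _ ↦ chainBounded_of_dist_le (V.2 j)⟩⟩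
  obtain ⟨D, hD⟩ := UniformlyChainCoverable.iUnion hV r
  refine ⟨D, fun V hV ↦ ?_⟩
  obtain ⟨C, hVC, hC⟩ := eventually_top.1 hD ⟨V, hV⟩
  exact (hC 0).mono (hVC.trans (iUnion_subset fun i ↦ by rw [Fin.fin_one_eq_zero i])) le_rfl le_rfl

theorem exists_lt_eq_succ_of_encard_le {ι : Type*} {T : ℕ → Set ι} {n : ℕ} (hT : Monotone T)
    (h0 : (T 0).Nonempty) (hn : (T n).encard ≤ n) : ∃ a < n, T a = T (a + 1) := by
  by_contra! hne
  have hcard : ∀ a ≤ n, (a + 1 : ℕ∞) ≤ (T a).encard := by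
    intro a ha
    induction a with
    | zero => simpa [Set.one_le_encard_iff_nonempty] using h0
    | succ a ih =>
      have hfin : (T a).Finite := (finite_of_encard_le_coe hn).subset (hT (by lia))
      have hlt := hfin.encard_lt_encard ((hT a.le_succ).ssubset_of_ne (hne a ha))
      exact_mod_cast Order.add_one_le_of_lt ((ih (by lia)).trans_lt hlt)
  exact absurd ((hcard n le_rfl).trans hn) (by exact_mod_cast n.lt_succ_self.not_ge)

theorem chainCoverable_of_multiplicity_le {ι : Type*} {W : ι → Set X} {L E : ℝ≥0}
    (hW : ∀ i, ∀ y ∈ W i, ∀ z ∈ W i, dist y z ≤ E) (hcover : ∀ y, ∃ i, y ∈ W i)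
    (hk : ∀ y, {i | (W i ∩ closedBall y (k * L)).Nonempty}.encard ≤ k) :
    ChainCoverable k L (E + k * L) (univ : Set X) := by
  -- The members of the cover met by the ball of radius `a * L` at `y` stop growing at some
  -- `a < k`. The points with the same such `a` form one colour, on which the set of members met
  -- is constant along `L`-chains.
  let T (y : X) (a : ℕ) : Set ι := {i | (W i ∩ closedBall y (a * L)).Nonempty}
  have mem_T {y i} (hy : y ∈ W i) (a : ℕ) : i ∈ T y a :=
    ⟨y, hy, mem_closedBall_self (by positivity)⟩
  have hT (y : X) : Monotone (T y) := fun a b hab i hi ↦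
    hi.mono (inter_subset_inter_right _ (closedBall_subset_closedBall (by gcongr)))
  have T_subset {y z : X} (hyz : dist y z ≤ L) (a : ℕ) : T y a ⊆ T z (a + 1) := fun i hi ↦ by
    refine hi.mono (inter_subset_inter_right _ (closedBall_subset_closedBall' ?_))
    push_cast
    linarith
  let C (a : Fin k) : Set X := {y | T y a = T y (a + 1)}
  refine ⟨C, fun y _ ↦ ?_, fun a y z hz ↦ ?_⟩
  · obtain ⟨i, hi⟩ := hcover y
    obtain ⟨a, ha, hTa⟩ := exists_lt_eq_succ_of_encard_le (hT y) ⟨i, mem_T hi 0⟩ (hk y)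
    exact mem_iUnion.2 ⟨⟨a, ha⟩, hTa⟩
  · have hconst : chainComponent L (C a) y ⊆ {z | T z a = T y a} := by
      refine chainComponent_subset_of_closed rfl fun u hu v huC hvC huv ↦ ?_
      rw [mem_ofPred_eq, ← hu]
      exact Subset.antisymm ((T_subset (by rwa [dist_comm]) a).trans huC.ge)
        ((T_subset huv a).trans hvC.ge)
    obtain ⟨i, hi⟩ := hcover y
    obtain ⟨w, hwi, hwz⟩ : i ∈ T z a := hconst hz ▸ mem_T hi a
    have hak : (a * L : ℝ) ≤ k * L := by
      gcongr
      exact a.2.le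
    push_cast
    linarith [dist_triangle y w z, hW i y hi w hwi, mem_closedBall.1 hwz]

end Chains

theorem asdimLE_iff {X : Type*} [MetricSpace X] {m : ℕ} :
    ASDimLE X m ↔ ∀ r : ℝ≥0, ∃ D : ℝ≥0, ChainCoverable (m + 1) r D (univ : Set X) := by
  constructor
  · intro h r
    obtain ⟨𝒰, hbdd, hdisj, hcover⟩ := h (r + 1) (by positivity)
    choose S hS using hbdd
    obtain ⟨D, hD⟩ := Finite.exists_le fun i ↦ (S i).toNNReal
    refine ⟨D, fun i ↦ ⋃₀ 𝒰 i, fun x _ ↦ ?_, fun i ↦ chainBounded_of_forall_mem ?_⟩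
    · obtain ⟨i, U, hU, hx⟩ := hcover x
      exact mem_iUnion.2 ⟨i, U, hU, hx⟩
    · rintro x ⟨U, hU, hx⟩ y hy
      have hsub : chainComponent r (⋃₀ 𝒰 i) x ⊆ U := by
        refine chainComponent_subset_of_closed hx fun u hu v _ ⟨V, hV, hv⟩ huv ↦ ?_
        by_contra hvU
        have := hdisj i U hU V hV (fun hUV ↦ hvU (hUV ▸ hv)) u hu v hv
        linarith
      exact (hS i U hU x hx y (hsub hy)).trans (Real.toNNReal_le_iff_le_coe.1 (hD i))
  · intro h R hR
    obtain ⟨D, C, hcover, hC⟩ := h ⟨R, hR.le⟩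
    refine ⟨fun i ↦ chainComponent ⟨R, hR.le⟩ (C i) '' C i, fun i ↦ ⟨D, ?_⟩, fun i ↦ ?_, fun x ↦ ?_⟩
    · rintro _ ⟨x, _, rfl⟩ u hu v hv
      exact hC i u v (chainComponent_eq_of_mem hu ▸ hv)
    · rintro _ ⟨x, hx, rfl⟩ _ ⟨y, hy, rfl⟩ hne u hu v hv
      by_contra! huv
      have := chainComponent_eq_of_dist_le (r := ⟨R, hR.le⟩) (chainComponent_subset hx hu)
        (chainComponent_subset hy hv) huv
      exact hne (by rw [← chainComponent_eq_of_mem hu, this, chainComponent_eq_of_mem hv])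
    · obtain ⟨i, hi⟩ := mem_iUnion.1 (hcover (mem_univ x))
      exact ⟨i, _, mem_image_of_mem _ hi, mem_chainComponent_self _ _ x⟩


section Bornologous

variable {X Y : Type*} [PseudoMetricSpace X] [PseudoMetricSpace Y] {f : X → Y}

/-- A bornologous map: points at bounded distance have images at bounded distance. -/
def Bornologous (f : X → Y) : Prop :=
  ∀ r : ℝ≥0, ∃ s : ℝ≥0, ∀ x x', dist x x' ≤ r → dist (f x) (f x') ≤ s

theorem Bornologous.isBounded_image (hf : Bornologous f) {B : Set X} (hB : IsBounded B) :
    IsBounded (f '' B) := by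
  obtain ⟨C, hC⟩ := isBounded_iff_nndist.1 hB
  obtain ⟨s, hs⟩ := hf C
  refine isBounded_iff.2 ⟨s, ?_⟩
  rintro _ ⟨x, hx, rfl⟩ _ ⟨x', hx', rfl⟩
  exact hs x x' (hC hx hx')

end Bornologous

section CoarselyNTo1

variable {X Y : Type*} [MetricSpace X] [MetricSpace Y] {f : X → Y} {n m k : ℕ}

theorem CoarseMap.bornologous (hf : CoarseMap f) : Bornologous f := by
  intro r
  obtain ⟨s, hs, hfs⟩ := hf.2 (r + 1) (by positivity)
  exact ⟨⟨s, hs.le⟩, fun x x' hxx' ↦ hfs x x' (hxx'.trans (le_add_of_nonneg_right zero_le_one))⟩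

theorem CoarselyNTo1.exists_cover_preimage_closedBall (hn : CoarselyNTo1 f n) (r : ℝ≥0) :
    ∃ S : ℝ≥0, ∀ y, ∃ V : Fin n → Set X, (∀ i, ∀ x ∈ V i, ∀ x' ∈ V i, dist x x' ≤ S) ∧
      f ⁻¹' closedBall y r ⊆ ⋃ i, V i := by
  obtain ⟨S, hS, hV⟩ := hn (2 * r + 1) (by positivity)
  refine ⟨⟨S, hS.le⟩, fun y ↦ hV _ fun u hu v hv ↦ ?_⟩
  linarith [dist_triangle_right u v y, mem_closedBall.1 hu, mem_closedBall.1 hv]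

theorem ASDimLE.of_coarselyNTo1 (hf : Bornologous f) (hn : CoarselyNTo1 f n) (h : ASDimLE Y m) :
    ASDimLE X m := by
  rw [asdimLE_iff] at h ⊢
  intro r
  obtain ⟨s, hs⟩ := hf r
  obtain ⟨E, C, hcover, hC⟩ := h s
  obtain ⟨S, hS⟩ := hn.exists_cover_preimage_closedBall E
  obtain ⟨D, hD⟩ := exists_chainBounded_iUnion X (Fin n) r S
  refine ⟨D, fun i ↦ f ⁻¹' C i, fun x _ ↦ ?_, fun i ↦ (hC i).preimage hs fun y ↦ ?_⟩
  · simpa using hcover (mem_univ (f x))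
  · obtain ⟨V, hV, hfV⟩ := hS y
    exact (hD V hV).mono hfV le_rfl le_rfl

theorem CoarselyNTo1.chainCoverable_mul (hf : Bornologous f) (hn : CoarselyNTo1 f n)
    (hs : CoarselySurjective f) (hX : ∀ r, ∃ D, ChainCoverable k r D (univ : Set X)) (L : ℝ≥0) :
    ∃ D, ChainCoverable (k * n) L D (univ : Set Y) := by
  obtain ⟨K, hK, hs⟩ := hs
  lift K to ℝ≥0 using hK.le
  obtain ⟨S, hS⟩ := hn.exists_cover_preimage_closedBall (k * n * L + K)
  obtain ⟨D, C, hcover, hC⟩ := hX S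
  obtain ⟨s, hfs⟩ := hf D
  let W (p : Fin k × Set X) : Set Y :=
    {y | ∃ x ∈ C p.1, chainComponent S (C p.1) x = p.2 ∧ dist y (f x) ≤ K}
  refine ⟨_, chainCoverable_of_multiplicity_le (W := W) (E := s + 2 * K) ?_ (fun y ↦ ?_) fun y ↦ ?_⟩
  · rintro ⟨c, Q⟩ y ⟨x, _, hx, hyx⟩ z ⟨x', _, hx', hzx'⟩
    have hxx' : dist x x' ≤ D :=
      hC c x x' ((hx'.trans hx.symm) ▸ mem_chainComponent_self S (C c) x')
    push_cast
    linarith [dist_triangle4_right y z (f x) (f x'), hfs x x' hxx']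
  · obtain ⟨x, hx⟩ := hs y
    obtain ⟨c, hc⟩ := mem_iUnion.1 (hcover (mem_univ x))
    exact ⟨(c, chainComponent S (C c) x), x, hc, rfl, hx⟩
  · obtain ⟨V, hV, hfV⟩ := hS y
    refine ((encard_le_encard ?_).trans (encard_chainComponent_le hV C)).trans_eq (by simp)
    rintro p ⟨z, ⟨x, hx, hxp, hzx⟩, hzy⟩
    refine ⟨x, hfV ?_, hx, hxp⟩
    rw [mem_preimage, mem_closedBall]
    push_cast at hzy ⊢
    linarith [dist_triangle_left (f x) y z, mem_closedBall.1 hzy]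

end CoarselyNTo1

section HasDistGap

variable {X Y : Type*} [PseudoMetricSpace X] [PseudoMetricSpace Y] {k : ℕ} {r D s t a b K L : ℝ≥0}

/-- No two points of `A` have distance in `(a, b]`. Then `dist x x' ≤ a` is transitive on `A` as
soon as `2 * a ≤ b`, so the points of `A` fall into well-separated clusters. -/
def HasDistGap (A : Set X) (a b : ℝ≥0) : Prop :=
  ∀ x ∈ A, ∀ x' ∈ A, dist x x' ≤ b → dist x x' ≤ a

theorem exists_hasDistGap_of_subset_iUnion {ι : Type*} [Fintype ι] {A : Set X} {V : ι → Set X}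
    {S : ℝ≥0} (hV : ∀ i, ∀ x ∈ V i, ∀ x' ∈ V i, dist x x' ≤ S) (hA : A ⊆ ⋃ i, V i)
    {a : ℕ → ℝ≥0} (ha : Monotone a) :
    ∃ i < Fintype.card (ι × ι) + 1, HasDistGap A (a i + 2 * S) (a (i + 1)) := by
  by_contra! hgap
  have hpair : ∀ i : Fin (Fintype.card (ι × ι) + 1), ∃ x x' p, x ∈ V (Prod.fst p) ∧
      x' ∈ V (Prod.snd p) ∧ a i + 2 * S < dist x x' ∧ dist x x' ≤ a (i + 1) := by
    intro i
    obtain ⟨x, hx, x', hx', hle, hlt⟩ : ∃ x ∈ A, ∃ x' ∈ A, dist x x' ≤ a (i + 1) ∧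
        a i + 2 * S < dist x x' := by simpa [HasDistGap] using hgap i i.2
    obtain ⟨p, hp⟩ := mem_iUnion.1 (hA hx)
    obtain ⟨q, hq⟩ := mem_iUnion.1 (hA hx')
    exact ⟨x, x', (p, q), hp, hq, hlt, hle⟩
  choose x x' p hx hx' hlt hle using hpair
  obtain ⟨i, j, hij, hp⟩ : ∃ i j, i < j ∧ p i = p j := by
    obtain ⟨i, j, hne, hp⟩ := Fintype.exists_ne_map_eq_of_card_lt p (by simp)
    rcases hne.lt_or_gt with h | h
    exacts [⟨i, j, h, hp⟩, ⟨j, i, h, hp.symm⟩]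
  have haij : (a (i + 1) : ℝ) ≤ a j := NNReal.coe_le_coe.2 (ha hij)
  linarith [dist_triangle4 (x j) (x i) (x' i) (x' j), hV _ _ (hx j) _ (hp ▸ hx i),
    hV _ _ (hp ▸ hx' i) _ (hx' j), hle i, hlt j]

theorem exists_monotone_chainCoverable_biUnion {A : ℝ≥0 → ℝ≥0 → Set Y}
    (hA : ∀ a, UniformlyChainCoverable k atTop (A a)) (r a₀ : ℝ≥0) (N : ℕ) :
    ∃ a : ℕ → ℝ≥0, a 0 = a₀ ∧ Monotone a ∧
      ∃ D, ChainCoverable k r D (⋃ i < N, A (a i) (a (i + 1))) := by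
  induction N generalizing r a₀ with
  | zero => exact ⟨fun _ ↦ a₀, rfl, monotone_const, 0, by simpa using chainCoverable_empty k r 0⟩
  | succ N ih =>
    obtain ⟨D, hD⟩ := hA a₀ r
    obtain ⟨b, hb, hab⟩ := (hD.and (eventually_ge_atTop a₀)).exists
    obtain ⟨a, rfl, ha, D', hD'⟩ := ih (2 * r + D) b
    refine ⟨fun i ↦ Nat.casesOn i a₀ a, rfl, monotone_nat_of_le_succ ?_,
      D' + 2 * (D + r), ?_⟩
    · rintro (_ | i)
      exacts [hab, ha i.le_succ]
    · rw [biUnion_lt_succ']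
      exact hb.union hD'

theorem exists_section_of_hasDistGap {F : Y → Set X} {Z : Set Y} (hF : ∀ y, (F y).Nonempty)
    (hr : ∀ y y', dist y y' ≤ r → ∀ x ∈ F y, ∃ x' ∈ F y', dist x x' ≤ s)
    (hL : ∀ y y', dist y y' ≤ L → ∀ x ∈ F y, ∃ x' ∈ F y', dist x x' ≤ t)
    (hZ : ∀ y ∈ Z, HasDistGap (F y) a b) (hb : s + 2 * t ≤ b) (hZL : ChainBounded r L Z) :
    ∃ g : Y → X, (∀ y, g y ∈ F y) ∧
      ∀ y ∈ Z, ∀ y' ∈ Z, dist y y' ≤ r → dist (g y) (g y') ≤ s + a := by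
  have hrange : ∀ C : range (chainComponent r Z), ∃ y, y ∈ C.1 := by
    rintro ⟨_, y, rfl⟩
    exact ⟨y, mem_chainComponent_self r Z y⟩
  choose rep hrep using hrange
  choose x hx using hF
  -- `x₀ y` lies over a point of the component of `y` and depends only on that component, so
  -- `g y` is the cluster of `F y` singled out by `x₀ y`.
  let x₀ (y : Y) : X := x (rep ⟨_, mem_range_self y⟩)
  have hg : ∀ y, ∃ x' ∈ F y, dist (x₀ y) x' ≤ t := fun y ↦
    hL _ y (by rw [dist_comm]; exact hZL y _ (hrep ⟨_, mem_range_self y⟩)) _ (hx _)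
  choose g hgF hg using hg
  refine ⟨g, hgF, fun y hy y' hy' hyy' ↦ ?_⟩
  have hx₀ : x₀ y = x₀ y' := by
    simp only [x₀, chainComponent_eq_of_dist_le hy hy' hyy']
  obtain ⟨x', hx'F, hx'⟩ := hr y y' hyy' (g y) (hgF y)
  have hcluster : dist x' (g y') ≤ a := by
    refine hZ y' hy' x' hx'F _ (hgF y') ?_
    have hgy' := hx₀ ▸ hg y'
    have hb' : (s + 2 * t : ℝ) ≤ b := by exact_mod_cast hb
    linarith [dist_triangle_left x' (g y') (g y), dist_triangle_left (g y) (g y') (x₀ y), hg y,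
      hgy', hb']
  exact (dist_triangle _ _ _).trans (add_le_add hx' hcluster)

/-- A coarse quotient map with constant `K`: every point near `f x` lies within `K` of the image of
a point near `x`. Equivalently, the coarse fibres `f ⁻¹' closedBall y K` over nearby points `y` are
at bounded Hausdorff distance. -/
def CoarseQuotientWith (K : ℝ≥0) (f : X → Y) : Prop :=
  ∀ r : ℝ≥0, ∃ s : ℝ≥0, ∀ x y, dist (f x) y ≤ r → ∃ x', dist x x' ≤ s ∧ dist (f x') y ≤ K

variable {f : X → Y}

theorem CoarseQuotientWith.exists_dist_le [Nonempty X] (hf : CoarseQuotientWith K f) (y : Y) :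
    ∃ x, dist (f x) y ≤ K := by
  let x : X := Classical.arbitrary X
  obtain ⟨_, hs⟩ := hf (nndist (f x) y)
  obtain ⟨x', _, hx'⟩ := hs x y le_rfl
  exact ⟨x', hx'⟩

theorem CoarseQuotientWith.exists_near_fibre (hf : CoarseQuotientWith K f) (r : ℝ≥0) :
    ∃ s : ℝ≥0, ∀ y y', dist y y' ≤ r → ∀ x ∈ f ⁻¹' closedBall y K,
      ∃ x' ∈ f ⁻¹' closedBall y' K, dist x x' ≤ s := by
  obtain ⟨s, hs⟩ := hf (K + r)
  refine ⟨s, fun y y' hyy' x hx ↦ ?_⟩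
  obtain ⟨x', hxx', hx'⟩ := hs x y' ((dist_triangle _ y _).trans (add_le_add hx hyy'))
  exact ⟨x', hx', hxx'⟩

theorem CoarseQuotientWith.chainCoverable_of_hasDistGap [Nonempty X] (hq : CoarseQuotientWith K f)
    (hf : Bornologous f) (hX : ∀ r, ∃ D, ChainCoverable k r D (univ : Set X)) (a r : ℝ≥0) :
    ∃ D, ∀ L : ℝ≥0, ∀ᶠ b in atTop, ∀ Z : Set Y, (∀ y ∈ Z, HasDistGap (f ⁻¹' closedBall y K) a b) →
      ChainBounded r L Z → ChainCoverable k r D Z := by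
  obtain ⟨s, hs⟩ := hq.exists_near_fibre r
  obtain ⟨E, hE⟩ := hX (s + a)
  obtain ⟨D, hD⟩ := hf E
  refine ⟨D + 2 * K, fun L ↦ ?_⟩
  obtain ⟨t, ht⟩ := hq.exists_near_fibre L
  filter_upwards [eventually_ge_atTop (s + 2 * t)] with b hb Z hZ hZL
  obtain ⟨g, hg, hgZ⟩ := exists_section_of_hasDistGap hq.exists_dist_le hs ht hZ hb hZL
  refine hE.comap hgZ fun y y' hyy' ↦ ?_
  push_cast
  linarith [dist_triangle4_left (f (g y)) (f (g y')) y y', mem_closedBall.1 (hg y),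
    mem_closedBall.1 (hg y'), hD _ _ hyy']

end HasDistGap

section CoarseQuotient

variable {X Y : Type*} [MetricSpace X] [MetricSpace Y] [Nonempty X] {f : X → Y} {n m k : ℕ}
  {K : ℝ≥0}

theorem CoarseQuotientWith.coarselySurjective (hf : CoarseQuotientWith K f) :
    CoarselySurjective f := by
  refine ⟨K + 1, by positivity, fun y ↦ ?_⟩
  obtain ⟨x, hx⟩ := hf.exists_dist_le y
  exact ⟨x, by rw [dist_comm]; linarith⟩

theorem CoarseQuotientWith.uniformlyChainCoverable_hasDistGap (hq : CoarseQuotientWith K f)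
    (hf : Bornologous f) (hn : CoarselyNTo1 f n)
    (hX : ∀ r, ∃ D, ChainCoverable k r D (univ : Set X)) (a : ℝ≥0) :
    UniformlyChainCoverable k atTop fun b ↦ {y | HasDistGap (f ⁻¹' closedBall y K) a b} := by
  let G (b : ℝ≥0) : Set Y := {y | HasDistGap (f ⁻¹' closedBall y K) a b}
  choose D C hcover hC using hn.chainCoverable_mul hf hq.coarselySurjective hX
  have hcolour : ∀ j, UniformlyChainCoverable k (atTop.curry atTop)
      fun p : ℝ≥0 × ℝ≥0 ↦ C p.1 j ∩ G p.2 := by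
    intro j r
    obtain ⟨E, hE⟩ := hq.chainCoverable_of_hasDistGap hf hX a r
    refine ⟨E, eventually_curry_iff.2 ?_⟩
    filter_upwards [eventually_ge_atTop r] with L hL
    filter_upwards [hE (D L)] with b hb
    exact hb _ inter_subset_right ((hC L j).mono inter_subset_left hL le_rfl)
  intro r
  obtain ⟨E, hE⟩ := UniformlyChainCoverable.iUnion hcolour r
  obtain ⟨L, hL⟩ := (eventually_curry_iff.1 hE).exists
  refine ⟨E, hL.mono fun b hb ↦ hb.mono (fun y hy ↦ ?_) le_rfl⟩
  obtain ⟨j, hj⟩ := mem_iUnion.1 (hcover L (mem_univ y))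
  exact mem_iUnion.2 ⟨j, hj, hy⟩

theorem ASDimLE.of_coarseQuotientWith (hq : CoarseQuotientWith K f) (hf : Bornologous f)
    (hn : CoarselyNTo1 f n) (h : ASDimLE X m) : ASDimLE Y m := by
  rw [asdimLE_iff] at h ⊢
  intro r
  obtain ⟨S, hS⟩ := hn.exists_cover_preimage_closedBall K
  obtain ⟨a, -, ha, D, hD⟩ := exists_monotone_chainCoverable_biUnion
    (fun a ↦ hq.uniformlyChainCoverable_hasDistGap hf hn h (a + 2 * S)) r 0
    (Fintype.card (Fin n × Fin n) + 1)
  refine ⟨D, hD.mono (fun y _ ↦ ?_) le_rfl⟩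
  obtain ⟨V, hV, hfV⟩ := hS y
  obtain ⟨i, hi, hgap⟩ := exists_hasDistGap_of_subset_iUnion hV hfV ha
  exact mem_biUnion hi hgap

end CoarseQuotient

section CoarselyOpen

variable {X Y : Type*} [MetricSpace X] [MetricSpace Y] {f : X → Y} {x₀ : X} {y₀ : Y} {K r : ℝ≥0}

theorem exists_tiIncreasing_le {d : ℕ → ℝ≥0} (hd : Tendsto d atTop atTop) :
    ∃ ρ, TIIncreasing ρ ∧ ∀ k : ℕ, ρ (d k) ≤ k := by
  have hne (t : ℝ≥0) : {k | t ≤ d k}.Nonempty := (hd.eventually_ge_atTop t).exists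
  refine ⟨fun t ↦ (sInf {k | t ≤ d k} : ℕ), ⟨fun t t' htt' ↦ ?_, ?_⟩, fun k ↦ ?_⟩
  · exact Nat.cast_le.2 (Nat.sInf_le (htt'.trans (Nat.sInf_mem (hne t'))))
  · refine tendsto_natCast_atTop_atTop.comp (tendsto_atTop.2 fun N ↦ ?_)
    have hlarge : ∀ᶠ t in atTop, ∀ k ∈ Finset.range N, d k < t :=
      (Finset.eventually_all _).2 fun k _ ↦ eventually_gt_atTop (d k)
    filter_upwards [hlarge] with t ht
    by_contra! hlt
    exact (ht _ (Finset.mem_range.2 hlt)).not_ge (Nat.sInf_mem (hne t))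
  · exact Nat.cast_le.2 (Nat.sInf_le (le_refl (d k)))

theorem tendsto_nndist_atTop {ι Z : Type*} [PseudoMetricSpace Z] {l : Filter ι} {z : ι → Z}
    (hz : Tendsto z l (cobounded Z)) (z₀ : Z) : Tendsto (fun i ↦ nndist (z i) z₀) l atTop :=
  NNReal.tendsto_coe_atTop.1 ((tendsto_dist_right_atTop_iff z₀).2 hz)

theorem MetricallyProper.tendsto_cobounded (hf : MetricallyProper f) :
    Tendsto f (cobounded X) (cobounded Y) := by
  intro s hs
  rw [mem_map, ← isCobounded_def, ← isBounded_compl_iff, ← preimage_compl]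
  exact hf _ (isBounded_compl_iff.2 hs)

theorem CoarselyOpen.exists_mem_image_closedBall (hopen : CoarselyOpen f x₀ y₀)
    (hf : MetricallyProper f) {x : ℕ → X} {y : ℕ → Y} (hx : Tendsto x atTop (cobounded X))
    (hxy : ∀ k, dist (f (x k)) (y k) ≤ r) : ∃ j k, y k ∈ f '' closedBall (x j) j := by
  obtain ⟨ρ, hρ, hρk⟩ := exists_tiIncreasing_le (tendsto_nndist_atTop hx x₀)
  have hA : ¬ IsBounded (range x) := fun hA ↦
    have ⟨k, hk⟩ := (hx.eventually (isBounded_def.1 hA)).exists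
    hk (mem_range_self k)
  obtain ⟨ρ', hρ', hsub⟩ := hopen (range x) hA ρ hρ
  have hρ'fx := hρ'.2.comp (tendsto_nndist_atTop (hf.tendsto_cobounded.comp hx) y₀)
  obtain ⟨k, hk⟩ := (hρ'fx.eventually_ge_atTop r).exists
  obtain ⟨z, ⟨_, ⟨j, rfl⟩, hz⟩, hzy⟩ := hsub (show y k ∈ _ from
    ⟨_, mem_image_of_mem f (mem_range_self k), le_trans (by rw [nndist_comm]; exact hxy k) hk⟩)
  exact ⟨j, k, z, by exact_mod_cast hz.trans (hρk j), hzy⟩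

theorem CoarseMap.isBounded_preimage_cthickening (hf : CoarseMap f) {B : Set X} (hB : IsBounded B)
    (r : ℝ≥0) : IsBounded (f ⁻¹' cthickening r (f '' B)) :=
  hf.1 _ (hf.bornologous.isBounded_image hB).cthickening

theorem CoarseMap.exists_lift_of_isBounded (hf : CoarseMap f) (hs : ∀ y, ∃ x, dist (f x) y ≤ K)
    {B : Set X} (hB : IsBounded B) (r : ℝ≥0) : ∃ s : ℝ≥0, ∀ x ∈ B, ∀ y, dist (f x) y ≤ r →
      ∃ x', dist x x' ≤ s ∧ dist (f x') y ≤ K := by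
  obtain ⟨s, hBs⟩ :=
    isBounded_iff_nndist.1 (hB.union (hf.isBounded_preimage_cthickening hB (K + r)))
  refine ⟨s, fun x hx y hxy ↦ ?_⟩
  obtain ⟨x', hx'⟩ := hs y
  refine ⟨x', hBs (Or.inl hx) (Or.inr ?_), hx'⟩
  refine mem_cthickening_of_dist_le _ (f x) _ _ (mem_image_of_mem f hx) ?_
  exact (dist_triangle_right _ _ y).trans (add_le_add hx' hxy)

theorem CoarseMap.exists_disjoint_of_isBounded (hf : CoarseMap f)
    (hs : ∀ y, ∃ x, dist (f x) y ≤ K)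
    (hbad : ∀ s : ℝ≥0, ∃ x y, dist (f x) y ≤ r ∧ Disjoint (closedBall x s) (f ⁻¹' closedBall y K))
    {B : Set X} (hB : IsBounded B) (s : ℝ≥0) :
    ∃ x y, dist (f x) y ≤ r ∧ Disjoint (closedBall x s) (f ⁻¹' closedBall y K) ∧
      Disjoint (closedBall x s ∪ f ⁻¹' {y}) B := by
  obtain ⟨t, ht⟩ := hf.exists_lift_of_isBounded hs
    ((hB.cthickening (δ := s)).union (hf.isBounded_preimage_cthickening hB r)) r
  obtain ⟨x, y, hxy, hdisj⟩ := hbad (max s t)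
  have hx : x ∉ cthickening s B ∪ f ⁻¹' cthickening r (f '' B) := fun hx ↦
    have ⟨x', hxx', hx'⟩ := ht x hx y hxy
    disjoint_left.1 hdisj (mem_closedBall'.2 (hxx'.trans (by simp))) hx'
  refine ⟨x, y, hxy, hdisj.mono_left (closedBall_subset_closedBall (by simp)),
    disjoint_left.2 fun z hz hzB ↦ hx ?_⟩
  rcases hz with hz | rfl
  · exact Or.inl (mem_cthickening_of_dist_le x z _ _ hzB (mem_closedBall'.1 hz))
  · exact Or.inr (mem_cthickening_of_dist_le (f x) _ _ _ (mem_image_of_mem f hzB) hxy)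

theorem CoarseMap.exists_seq_disjoint (hf : CoarseMap f) (x₀ : X)
    (hs : ∀ y, ∃ x, dist (f x) y ≤ K)
    (hbad : ∀ s : ℝ≥0, ∃ x y, dist (f x) y ≤ r ∧ Disjoint (closedBall x s) (f ⁻¹' closedBall y K)) :
    ∃ (x : ℕ → X) (y : ℕ → Y), Tendsto x atTop (cobounded X) ∧ (∀ k, dist (f (x k)) (y k) ≤ r) ∧
      ∀ j k, Disjoint (closedBall (x j) j) (f ⁻¹' {y k}) := by
  let E (p : X × Y × ℕ) : Set X := closedBall p.1 p.2.2 ∪ f ⁻¹' {p.2.1}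
  have hE (p) : IsBounded (E p) := isBounded_closedBall.union (hf.1 _ isBounded_singleton)
  obtain ⟨p, hp, hpp⟩ := exists_seq_of_forall_finset_exists
    (fun p : X × Y × ℕ ↦ p.2.2 < dist p.1 x₀ ∧ dist (f p.1) p.2.1 ≤ r ∧
      Disjoint (closedBall p.1 p.2.2) (f ⁻¹' {p.2.1}))
    (fun p q ↦ p.2.2 < q.2.2 ∧ Disjoint (E p) (E q)) fun F _ ↦ by
      let s : ℕ := F.sup (fun p ↦ p.2.2) + 1
      obtain ⟨x, y, hxy, hdisj, hB⟩ := hf.exists_disjoint_of_isBounded hs hbad (s := s)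
        (isBounded_closedBall (x := x₀) (r := s) |>.union
          ((isBounded_biUnion_finset F).2 fun p _ ↦ hE p))
      obtain ⟨hx₀, hF⟩ := disjoint_union_right.1 hB
      refine ⟨(x, y, s), ⟨?_, hxy, ?_⟩, fun p hp ↦ ⟨?_, ?_⟩⟩
      · simpa using disjoint_left.1 hx₀ (Or.inl (mem_closedBall_self (by positivity)))
      · exact hdisj.mono_right (preimage_mono (by simp))
      · exact Nat.lt_succ_of_le (Finset.le_sup (f := fun p : X × Y × ℕ ↦ p.2.2) hp)
      · exact (hF.mono_right (subset_biUnion_of_mem (u := E) hp)).symm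
  have hk : ∀ k : ℕ, k ≤ (p k).2.2 :=
    fun k ↦ StrictMono.le_apply (f := fun k ↦ (p k).2.2) fun j k hjk ↦ (hpp j k hjk).1
  refine ⟨fun k ↦ (p k).1, fun k ↦ (p k).2.1, ?_, fun k ↦ (hp k).2.1, fun j k ↦ ?_⟩
  · exact (tendsto_dist_right_atTop_iff x₀).1 (tendsto_atTop_mono
      (fun k ↦ (Nat.cast_le.2 (hk k)).trans (hp k).1.le) tendsto_natCast_atTop_atTop)
  · refine Disjoint.mono_left (closedBall_subset_closedBall (Nat.cast_le.2 (hk j))) ?_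
    rcases lt_trichotomy j k with hjk | rfl | hkj
    · exact (hpp j k hjk).2.mono subset_union_left subset_union_right
    · exact (hp j).2.2
    · exact (hpp k j hkj).2.symm.mono subset_union_left subset_union_right

theorem CoarselyOpen.exists_coarseQuotientWith (hopen : CoarselyOpen f x₀ y₀) (hf : CoarseMap f)
    (hs : CoarselySurjective f) : ∃ K, CoarseQuotientWith K f := by
  obtain ⟨K, hK, hs⟩ := hs
  lift K to ℝ≥0 using hK.le
  simp only [dist_comm _ (f _)] at hs
  refine ⟨K, fun r ↦ ?_⟩
  by_contra! hbad
  obtain ⟨x, y, hx, hxy, hdisj⟩ := hf.exists_seq_disjoint x₀ (r := r) hs fun s ↦ by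
    obtain ⟨x, y, hxy, hfar⟩ := hbad s
    exact ⟨x, y, hxy, disjoint_left.2 fun x' hx' hx'y ↦
      (hfar x' (mem_closedBall'.1 hx')).not_ge hx'y⟩
  obtain ⟨j, k, z, hz, hzy⟩ := hopen.exists_mem_image_closedBall hf.1 hx hxy
  exact disjoint_left.1 (hdisj j k) hz hzy

end CoarselyOpen

theorem asdim_eq_of_coarselyOpen_coarselyNTo1_general {X Y : Type*} [MetricSpace X]
    [MetricSpace Y] {n : ℕ} {f : X → Y} {x₀ : X} {y₀ : Y} (hf : CoarseMap f)
    (hopen : CoarselyOpen f x₀ y₀) (hn : CoarselyNTo1 f n) (hs : CoarselySurjective f) :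
    asdim Y = asdim X := by
  have : Nonempty X := ⟨x₀⟩
  obtain ⟨K, hq⟩ := hopen.exists_coarseQuotientWith hf hs
  have asdimLE_iff_asdimLE (m : ℕ) : ASDimLE Y m ↔ ASDimLE X m :=
    ⟨.of_coarselyNTo1 hf.bornologous hn, .of_coarseQuotientWith hq hf.bornologous hn⟩
  simp only [asdim, asdimLE_iff_asdimLE]

/-- A coarse, coarsely open, coarsely `n`-to-1 and coarsely
surjective map between nonempty proper metric spaces preserves the asymptotic
dimension. -/
theorem asdim_eq_of_coarselyOpen_coarselyNTo1 {X Y : Type*}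
    [MetricSpace X] [ProperSpace X] [Nonempty X]
    [MetricSpace Y] [ProperSpace Y] [Nonempty Y] (n : ℕ) (f : X → Y)
    (hf : CoarseMap f) (hopen : ∀ (x₀ : X) (y₀ : Y), CoarselyOpen f x₀ y₀)
    (hn : CoarselyNTo1 f n) (hs : CoarselySurjective f) :
    asdim Y = asdim X := by
  exact asdim_eq_of_coarselyOpen_coarselyNTo1_general hf
    (hopen (Classical.arbitrary X) (Classical.arbitrary Y)) hn hs
end

section
/- Let D be the set of finitely supported sequences a : ℕ → {0,1} equipped with the metric d(a,b) = Σ_{i∈ℕ} |a_i − b_i|·2^i (a finite sum), and let ℕ carry the Euclidean metric. The map f : D → ℕ defined by f(a) = Σ_{i∈ℕ} a_i·2^i is a bijection, is coarse, and is coarsely 2-to-1. -/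
open Metric Bornology Function Set

/-- The coarse Cantor set: finitely supported `{0,1}`-sequences, encoded as the
finite set of indices where the sequence equals `1`, with the metric
`d(a,b) = ∑_i |a_i - b_i| · 2^i` (the sum of `2^i` over the symmetric
difference of the supports). -/
abbrev CoarseCantor : Type := Finset ℕ

noncomputable instance : MetricSpace CoarseCantor :=
  { dist := fun A B : Finset ℕ => ∑ i ∈ symmDiff A B, (2:ℝ) ^ i
    dist_self := fun A => by
      show (∑ i ∈ symmDiff A A, (2:ℝ) ^ i) = 0
      simp [symmDiff_self]
    dist_comm := fun A B => by
      show (∑ i ∈ symmDiff A B, (2:ℝ) ^ i) = ∑ i ∈ symmDiff B A, (2:ℝ) ^ i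
      rw [symmDiff_comm]
    dist_triangle := fun A B C => by
      show (∑ i ∈ symmDiff A C, (2:ℝ) ^ i) ≤
        (∑ i ∈ symmDiff A B, (2:ℝ) ^ i) + ∑ i ∈ symmDiff B C, (2:ℝ) ^ i
      have hsub : symmDiff A C ⊆ symmDiff A B ∪ symmDiff B C := by
        simpa [Finset.sup_eq_union] using symmDiff_triangle A B C
      have h1 : ∑ i ∈ symmDiff A C, (2:ℝ) ^ i ≤
          ∑ i ∈ symmDiff A B ∪ symmDiff B C, (2:ℝ) ^ i :=
        Finset.sum_le_sum_of_subset_of_nonneg hsub (fun i _ _ => by positivity)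
      have h2 := Finset.sum_union_inter (s₁ := symmDiff A B) (s₂ := symmDiff B C)
        (f := fun i : ℕ => (2:ℝ) ^ i)
      have h3 : (0:ℝ) ≤ ∑ i ∈ symmDiff A B ∩ symmDiff B C, (2:ℝ) ^ i :=
        Finset.sum_nonneg fun i _ => by positivity
      linarith
    eq_of_dist_eq_zero := fun {A B} h => by
      have h' : (∑ i ∈ symmDiff A B, (2:ℝ) ^ i) = 0 := h
      have hempty : symmDiff A B = ∅ := by
        by_contra hne
        have hpos : 0 < ∑ i ∈ symmDiff A B, (2:ℝ) ^ i :=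
          Finset.sum_pos (fun i _ => by positivity)
            (Finset.nonempty_iff_ne_empty.mpr hne)
        exact absurd h' (ne_of_gt hpos)
      have : symmDiff A B = (⊥ : Finset ℕ) := by simpa using hempty
      exact symmDiff_eq_bot.mp this }

/-- The coarse version of the Cantor map: `a ↦ ∑ aᵢ 2^i`. -/
def cantorMap (A : CoarseCantor) : ℕ := ∑ i ∈ A, 2 ^ i

/-!
The map carries the metric of the coarse Cantor set to `d(a, b) = a ^^^ b` on `ℕ`. This dominates
`|a - b|`, so the map is `1`-Lipschitz, and `a ^^^ b < 2 ^ k` exactly when `a` and `b` lie in the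
same block `[q * 2 ^ k, (q + 1) * 2 ^ k)`. A set of naturals of diameter less than `2 ^ k` meets at
most two such consecutive blocks, and the preimage of each block has diameter at most `2 ^ k`.
-/

theorem MetricallyProper.of_injective {X Y : Type*} [MetricSpace X] [MetricSpace Y] [ProperSpace Y]
    [DiscreteTopology Y] {f : X → Y} (hf : Injective f) : MetricallyProper f := fun B hB ↦
  have hfin : B.Finite := by
    simpa only [inter_univ] using
      finite_isBounded_inter_isClosed DiscreteTopology.isDiscrete hB isClosed_univ
  (hfin.preimage hf.injOn).isBounded

theorem MetricallyProper.coarseMap_of_lipschitzWith {X Y : Type*} [MetricSpace X] [MetricSpace Y]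
    {f : X → Y} {K : NNReal} (hf : MetricallyProper f) (hK : LipschitzWith K f) : CoarseMap f :=
  ⟨hf, fun R hR ↦ ⟨K * R + 1, by positivity, fun _ _ hdist ↦
    (hK.dist_le_mul_of_le hdist).trans (le_add_of_nonneg_right zero_le_one)⟩⟩

theorem exists_forall_div_eq_or_div_eq_add_one {A : Set ℕ} {d : ℕ}
    (hA : ∀ m ∈ A, ∀ n ∈ A, dist m n < d) : ∃ q, ∀ n ∈ A, n / d = q ∨ n / d = q + 1 := by
  refine ⟨sInf A / d, fun n hn ↦ ?_⟩
  have hle : sInf A ≤ n := Nat.sInf_le hn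
  have hlt : n < sInf A + d := by
    have hsub : (n : ℝ) - (sInf A : ℕ) < d :=
      (le_abs_self _).trans_lt (hA n hn _ (Nat.sInf_mem ⟨n, hn⟩))
    exact_mod_cast sub_lt_iff_lt_add'.1 hsub
  have hlower : sInf A / d ≤ n / d := Nat.div_le_div_right hle
  have hupper : n / d ≤ sInf A / d + 1 := by
    rw [← Nat.add_div_right _ (by lia)]
    exact Nat.div_le_div_right hlt.le
  lia

theorem CoarselyNTo1.two_of_dist_le_of_div_eq {X : Type*} [MetricSpace X] {f : X → ℕ}
    (hf : ∀ R : ℝ, ∃ d : ℕ, R < d ∧ ∃ S, ∀ x x', f x / d = f x' / d → dist x x' ≤ S) :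
    CoarselyNTo1 f 2 := by
  intro R _
  obtain ⟨d, hRd, S, hS⟩ := hf R
  refine ⟨max S 1, by positivity, fun A hA ↦ ?_⟩
  obtain ⟨q, hq⟩ := exists_forall_div_eq_or_div_eq_add_one
    fun m hm n hn ↦ (hA m hm n hn).trans_lt hRd
  refine ⟨![{x | f x / d = q}, {x | f x / d = q + 1}], Fin.forall_fin_two.2 ⟨?_, ?_⟩, ?_⟩
  · exact fun x hx x' hx' ↦ le_max_of_le_left (hS x x' (hx.trans hx'.symm))
  · exact fun x hx x' hx' ↦ le_max_of_le_left (hS x x' (hx.trans hx'.symm))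
  · exact fun x hx ↦ mem_iUnion.2 (Fin.exists_fin_two.2 (hq (f x) hx))

theorem norm_sum_sub_sum_le_sum_symmDiff {ι E : Type*} [DecidableEq ι] [SeminormedAddCommGroup E]
    (s t : Finset ι) (f : ι → E) :
    ‖∑ i ∈ s, f i - ∑ i ∈ t, f i‖ ≤ ∑ i ∈ symmDiff s t, ‖f i‖ :=
  calc ‖∑ i ∈ s, f i - ∑ i ∈ t, f i‖
      = ‖∑ i ∈ s \ t, f i - ∑ i ∈ t \ s, f i‖ := by rw [Finset.sum_sdiff_sub_sum_sdiff]
    _ ≤ ∑ i ∈ s \ t, ‖f i‖ + ∑ i ∈ t \ s, ‖f i‖ :=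
      norm_sub_le_of_le (norm_sum_le _ _) (norm_sum_le _ _)
    _ = ∑ i ∈ symmDiff s t, ‖f i‖ := (Finset.sum_union disjoint_sdiff_sdiff).symm

theorem xor_lt_two_pow_iff_div_eq {a b k : ℕ} : a ^^^ b < 2 ^ k ↔ a / 2 ^ k = b / 2 ^ k := by
  rw [← Nat.div_eq_zero_iff_lt (by positivity), Nat.xor_div_two_pow, Nat.xor_eq_zero_iff]

theorem CoarseCantor.dist_eq_sum_symmDiff (A B : CoarseCantor) :
    dist A B = ∑ i ∈ symmDiff A B, (2 : ℝ) ^ i :=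
  rfl

theorem cantorMap_bijective : Bijective cantorMap :=
  Finset.equivBitIndices.symm.bijective

theorem lipschitzWith_one_cantorMap : LipschitzWith 1 cantorMap :=
  LipschitzWith.mk_one fun A B ↦ by
    simpa [cantorMap, Nat.dist_eq, CoarseCantor.dist_eq_sum_symmDiff] using
      norm_sum_sub_sum_le_sum_symmDiff A B fun i ↦ (2 : ℝ) ^ i

theorem testBit_cantorMap (A : CoarseCantor) (i : ℕ) :
    (cantorMap A).testBit i = decide (i ∈ A) := by
  rw [Bool.eq_iff_iff, decide_eq_true_iff, ← Nat.mem_bitIndices, ← List.mem_toFinset, cantorMap,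
    Finset.toFinset_bitIndices_sum_two_pow]

theorem cantorMap_symmDiff (A B : CoarseCantor) :
    cantorMap (symmDiff A B) = cantorMap A ^^^ cantorMap B := by
  refine Nat.eq_of_testBit_eq fun i ↦ ?_
  simp only [Nat.testBit_xor, testBit_cantorMap, Finset.mem_symmDiff]
  by_cases hA : i ∈ A <;> by_cases hB : i ∈ B <;> simp [hA, hB]

theorem CoarseCantor.dist_eq_cantorMap_xor_cantorMap (A B : CoarseCantor) :
    dist A B = (cantorMap A ^^^ cantorMap B : ℕ) := by
  rw [← cantorMap_symmDiff, dist_eq_sum_symmDiff, cantorMap]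
  norm_cast

theorem CoarseCantor.dist_lt_two_pow_iff_cantorMap_div_eq {A B : CoarseCantor} {k : ℕ} :
    dist A B < 2 ^ k ↔ cantorMap A / 2 ^ k = cantorMap B / 2 ^ k := by
  rw [dist_eq_cantorMap_xor_cantorMap, ← xor_lt_two_pow_iff_div_eq]
  norm_cast

theorem coarselyNTo1_two_cantorMap : CoarselyNTo1 cantorMap 2 := by
  refine .two_of_dist_le_of_div_eq fun R ↦ ?_
  obtain ⟨k, hk⟩ := pow_unbounded_of_one_lt R one_lt_two
  exact ⟨2 ^ k, by exact_mod_cast hk, 2 ^ k,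
    fun _ _ h ↦ (CoarseCantor.dist_lt_two_pow_iff_cantorMap_div_eq.2 h).le⟩

/-- The map `f : D → ℕ`, `f(a) = ∑ aᵢ 2^i`, from the coarse
Cantor set (with the metric `d(a,b) = ∑ |aᵢ - bᵢ| 2^i`) to `ℕ` with the
Euclidean metric, is a bijection, is coarse, and is coarsely 2-to-1. -/
theorem cantorMap_bijective_coarse_coarsely2To1 :
    Function.Bijective cantorMap ∧ CoarseMap cantorMap ∧ CoarselyNTo1 cantorMap 2 :=
  have hproper : MetricallyProper cantorMap := .of_injective cantorMap_bijective.injective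
  ⟨cantorMap_bijective, hproper.coarseMap_of_lipschitzWith lipschitzWith_one_cantorMap,
    coarselyNTo1_two_cantorMap⟩
end
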